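/- For all integers n ≥ 2 and 0 ≤ m ≤ n−1, the number of ordered pairs (T_1, T_2) of spanning trees of the complete graph K_n with exactly m common edges equals Σ_{j=0}^{n−m−1} (−1)^j C(m+j, m) n^{2(n−m−j−2)} ((n−1)!/(n−m−j−1)!) Σ_{k=0}^{m+j} C(n−k, m+j−k) n^k / k!, where the expression is evaluated in the rationals (so that n^{2(n−m−j−2)} is interpreted as a possibly negative power of n). -/

import Mathlib

namespace Moon
open Finset SimpleGraph
open scoped Classical
set_option linter.unusedSectionVars false
set_option linter.unusedVariables false

section graph
variable {V : Type} [Fintype V]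

noncomputable def Gr (E : Finset (Sym2 V)) : SimpleGraph V := fromEdgeSet (E : Set (Sym2 V))

def IsFor (E : Finset (Sym2 V)) : Prop := (∀ e ∈ E, ¬ e.IsDiag) ∧ (Gr E).IsAcyclic

noncomputable def comp (E : Finset (Sym2 V)) (v : V) : Finset V :=
  univ.filter fun w => (Gr E).Reachable v w

noncomputable def comps (E : Finset (Sym2 V)) : Finset (Finset V) := univ.image (comp E)

noncomputable def mer (E : Finset (Sym2 V)) (u v : V) (C : Finset V) : Finset V :=
  if C = comp E u ∨ C = comp E v then comp E u ∪ comp E v else C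

noncomputable def compE (E : Finset (Sym2 V)) (e : Sym2 V) : Finset V := comp E (Quot.out e).1

lemma mem_comp {E : Finset (Sym2 V)} {v w : V} : w ∈ comp E v ↔ (Gr E).Reachable v w := by
  simp [comp]

lemma self_mem_comp (E : Finset (Sym2 V)) (v : V) : v ∈ comp E v := mem_comp.2 (Reachable.refl _)

lemma comp_eq_iff {E : Finset (Sym2 V)} {v w : V} : comp E v = comp E w ↔ (Gr E).Reachable v w := by
  constructor
  · intro h
    have := self_mem_comp E w
    rw [← h] at this
    exact mem_comp.1 this
  · intro h
    ext x
    simp only [mem_comp]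
    exact ⟨fun k => h.symm.trans k, fun k => h.trans k⟩

lemma compE_mk {E : Finset (Sym2 V)} {u v : V} (h : s(u, v) ∈ E) :
    compE E s(u, v) = comp E u := by
  unfold compE
  rw [comp_eq_iff]
  have h1 : s((Quot.out s(u,v)).1, (Quot.out s(u,v)).2) = s(u, v) := Quot.out_eq s(u,v)
  rcases Sym2.eq_iff.1 h1 with ⟨h2, h3⟩ | ⟨h2, h3⟩
  · rw [h2]
  · rw [h2]
    by_cases huv : u = v
    · rw [huv]
    · exact (Adj.reachable (by simp [Gr, huv, h])).symm

lemma Gr_insert (E : Finset (Sym2 V)) (u v : V) : Gr (insert s(u, v) E) = Gr E ⊔ edge u v := by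
  ext a b
  simp only [Gr, fromEdgeSet_adj, sup_adj, edge_adj, coe_insert, Set.mem_insert_iff, mem_coe,
    Sym2.eq_iff]
  tauto

lemma reach_sup_edge {G : SimpleGraph V} {u v a b : V} :
    (G ⊔ edge u v).Reachable a b ↔ G.Reachable a b ∨ (G.Reachable a u ∧ G.Reachable v b) ∨
      (G.Reachable a v ∧ G.Reachable u b) := by
  constructor
  · rintro ⟨p⟩
    induction p with
    | nil => left; exact Reachable.refl _
    | cons h p ih =>
      rename_i x y z
      rw [sup_adj, edge_adj] at h
      rcases h with h | ⟨⟨rfl, rfl⟩ | ⟨rfl, rfl⟩, _⟩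
      · have h := h.reachable
        rcases ih with ih | ⟨i1, i2⟩ | ⟨i1, i2⟩
        · exact Or.inl (h.trans ih)
        · exact Or.inr (Or.inl ⟨h.trans i1, i2⟩)
        · exact Or.inr (Or.inr ⟨h.trans i1, i2⟩)
      · rcases ih with ih | ⟨i1, i2⟩ | ⟨i1, i2⟩
        · exact Or.inr (Or.inl ⟨Reachable.refl _, ih⟩)
        · exact Or.inl (i1.symm.trans i2)
        · exact Or.inl i2
      · rcases ih with ih | ⟨i1, i2⟩ | ⟨i1, i2⟩
        · exact Or.inr (Or.inr ⟨Reachable.refl _, ih⟩)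
        · exact Or.inl i2
        · exact Or.inl (i1.symm.trans i2)
  · have key : (G ⊔ edge u v).Reachable u v := by
      by_cases huv : u = v
      · rw [huv]
      · exact Adj.reachable (by simp [edge_adj, huv])
    have mono : ∀ {x y}, G.Reachable x y → (G ⊔ edge u v).Reachable x y :=
      fun h => h.mono le_sup_left
    rintro (h | ⟨h1, h2⟩ | ⟨h1, h2⟩)
    · exact mono h
    · exact ((mono h1).trans key).trans (mono h2)
    · exact ((mono h1).trans key.symm).trans (mono h2)

lemma comp_insert (E : Finset (Sym2 V)) (u v w : V) :
    comp (insert s(u, v) E) w = mer E u v (comp E w) := by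
  unfold mer
  simp only [comp_eq_iff]
  ext x
  rw [mem_comp, Gr_insert, reach_sup_edge]
  split_ifs with h
  · rw [mem_union, mem_comp, mem_comp]
    rcases h with h | h
    · have := @Reachable.trans _ (Gr E) w u x h
      have := @Reachable.trans _ (Gr E) u w x h.symm
      have h3 := @Reachable.trans _ (Gr E) w v x
      tauto
    · have := @Reachable.trans _ (Gr E) w v x h
      have := @Reachable.trans _ (Gr E) v w x h.symm
      have h3 := @Reachable.trans _ (Gr E) w u x
      tauto
  · rw [mem_comp]
    tauto

lemma isFor_empty : IsFor (∅ : Finset (Sym2 V)) := by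
  refine ⟨by simp, ?_⟩
  have : Gr (∅ : Finset (Sym2 V)) = ⊥ := by simp [Gr]
  rw [this]; exact isAcyclic_bot

lemma IsFor.subset {E F : Finset (Sym2 V)} (h : IsFor F) (hs : E ⊆ F) : IsFor E :=
  ⟨fun e he => h.1 e (hs he), h.2.anti (fromEdgeSet_mono (by exact_mod_cast hs))⟩

lemma isFor_insert {E : Finset (Sym2 V)} (h : IsFor E) (u v : V) :
    (s(u, v) ∉ E ∧ IsFor (insert s(u, v) E)) ↔ comp E u ≠ comp E v := by
  rw [Ne, comp_eq_iff]
  unfold IsFor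
  rw [Gr_insert]
  constructor
  · rintro ⟨h1, h2, h3⟩ h4
    rw [isAcyclic_sup_fromEdgeSet_iff] at h3
    have huv : u ≠ v := by simpa using h2 s(u,v) (by simp)
    rcases h3.2 h4 with h5 | h5
    · exact huv h5
    · exact h1 (by simpa [Gr, huv] using h5)
  · intro h4
    have huv : u ≠ v := by rintro rfl; exact h4 (Reachable.refl _)
    refine ⟨fun h5 => h4 (Adj.reachable (by simp [Gr, huv, h5])), ?_, h.2.sup_edge_of_not_reachable h4⟩
    intro e he
    rcases mem_insert.1 he with rfl | he
    · simpa using huv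
    · exact h.1 e he

lemma comps_insert {E : Finset (Sym2 V)} {u v : V} (h : comp E u ≠ comp E v) :
    comps (insert s(u, v) E) =
      insert (comp E u ∪ comp E v) (((comps E).erase (comp E u)).erase (comp E v)) := by
  ext C
  simp only [comps, mem_image, mem_univ, true_and, mem_insert, mem_erase, comp_insert, mer]
  constructor
  · rintro ⟨w, rfl⟩
    split_ifs with hw
    · simp
    · right
      push Not at hw
      exact ⟨hw.2, hw.1, w, rfl⟩
  · rintro (rfl | ⟨h1, h2, w, rfl⟩)
    · exact ⟨u, by simp⟩
    · exact ⟨w, by simp [h1, h2]⟩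

lemma comp_mem_comps (E : Finset (Sym2 V)) (u : V) : comp E u ∈ comps E :=
  mem_image_of_mem _ (mem_univ _)

lemma union_notMem {E : Finset (Sym2 V)} {u v : V} (h : comp E u ≠ comp E v) :
    comp E u ∪ comp E v ∉ ((comps E).erase (comp E u)).erase (comp E v) := by
  intro hm
  simp only [mem_erase, comps, mem_image, mem_univ, true_and] at hm
  obtain ⟨-, h2, w, hw⟩ := hm
  have : u ∈ comp E w := by rw [hw]; exact mem_union_left _ (self_mem_comp _ _)
  exact h2 (by rw [← hw, comp_eq_iff]; exact mem_comp.1 this)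

lemma sum_comps_insert {E : Finset (Sym2 V)} {u v : V} (h : comp E u ≠ comp E v)
    (f : Finset V → ℚ) :
    ∑ C ∈ comps (insert s(u, v) E), f C =
      f (comp E u ∪ comp E v) + (∑ C ∈ comps E, f C - f (comp E u) - f (comp E v)) := by
  rw [comps_insert h, sum_insert (union_notMem h)]
  have h1 := add_sum_erase (comps E) f (comp_mem_comps E u)
  have h2 := add_sum_erase ((comps E).erase (comp E u)) f
    (mem_erase.2 ⟨h.symm, comp_mem_comps E v⟩)
  linarith

lemma prod_comps_insert {E : Finset (Sym2 V)} {u v : V} (h : comp E u ≠ comp E v)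
    (f : Finset V → ℚ) :
    (∏ C ∈ comps (insert s(u, v) E), f C) * (f (comp E u) * f (comp E v)) =
      f (comp E u ∪ comp E v) * ∏ C ∈ comps E, f C := by
  rw [comps_insert h, prod_insert (union_notMem h)]
  have h1 := mul_prod_erase (comps E) f (comp_mem_comps E u)
  have h2 := mul_prod_erase ((comps E).erase (comp E u)) f
    (mem_erase.2 ⟨h.symm, comp_mem_comps E v⟩)
  rw [← h1, ← h2]; ring

lemma card_union_comp {E : Finset (Sym2 V)} {u v : V} (h : comp E u ≠ comp E v) :
    ((comp E u ∪ comp E v).card : ℚ) = (comp E u).card + (comp E v).card := by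
  rw [card_union_of_disjoint]
  · push_cast; rfl
  · rw [Finset.disjoint_left]
    intro x h1 h2
    exact h (comp_eq_iff.2 ((mem_comp.1 h1).trans (mem_comp.1 h2).symm))

lemma card_comp_pos {E : Finset (Sym2 V)} {C : Finset V} (h : C ∈ comps E) : (0 : ℚ) < C.card := by
  simp only [comps, mem_image, mem_univ, true_and] at h
  obtain ⟨w, rfl⟩ := h
  exact_mod_cast card_pos.2 ⟨w, self_mem_comp E w⟩

lemma sum_vertices (E : Finset (Sym2 V)) (f : Finset V → ℚ) :
    ∑ v, f (comp E v) = ∑ C ∈ comps E, (C.card : ℚ) * f C := by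
  rw [sum_comp f (comp E)]
  apply sum_congr rfl
  intro C hC
  obtain ⟨w, -, rfl⟩ := mem_image.1 hC
  rw [nsmul_eq_mul]
  congr 3
  ext x
  rw [mem_filter, mem_comp, comp_eq_iff]
  simp [reachable_comm]

lemma sum_card_comps (E : Finset (Sym2 V)) : ∑ C ∈ comps E, (C.card : ℚ) = Fintype.card V := by
  have := sum_vertices E (fun _ => 1)
  simpa using this.symm

lemma comp_empty (v : V) : comp (∅ : Finset (Sym2 V)) v = {v} := by
  ext x
  have : Gr (∅ : Finset (Sym2 V)) = ⊥ := by simp [Gr]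
  rw [mem_comp, this]; simp [eq_comm]

lemma comps_card_one {C : Finset V} (h : C ∈ comps (∅ : Finset (Sym2 V))) : C.card = 1 := by
  obtain ⟨w, -, rfl⟩ := mem_image.1 h
  simp [comp_empty]

/-- number of edges in a component is size minus one -/
lemma sum_edges {E : Finset (Sym2 V)} (hE : IsFor E) :
    ∀ (g : Finset V → ℚ), ∑ e ∈ E, g (compE E e) = ∑ C ∈ comps E, ((C.card : ℚ) - 1) * g C := by
  induction E using Finset.induction_on with
  | empty =>
    intro g
    rw [sum_empty, sum_eq_zero]
    intro C hC
    simp [comps_card_one hC]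
  | insert e E he ih =>
    intro g
    have hE' : IsFor E := hE.subset (subset_insert _ _)
    induction e with | h u v
    have huv := (isFor_insert hE' u v).1 ⟨he, hE⟩
    rw [sum_insert he, compE_mk (mem_insert_self _ _), comp_insert, sum_comps_insert huv]
    have h1 : ∑ e ∈ E, g (compE (insert s(u, v) E) e) = ∑ e ∈ E, g (mer E u v (compE E e)) := by
      apply sum_congr rfl
      intro e _
      unfold compE
      rw [comp_insert]
    rw [h1, ih hE' (fun C => g (mer E u v C)), card_union_comp huv]
    have h2 : ∀ f : Finset V → ℚ, ∑ C ∈ comps E, f C = f (comp E u) + f (comp E v) +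
        ∑ C ∈ ((comps E).erase (comp E u)).erase (comp E v), f C := by
      intro f
      have h1 := add_sum_erase (comps E) f (comp_mem_comps E u)
      have h2 := add_sum_erase ((comps E).erase (comp E u)) f
        (mem_erase.2 ⟨huv.symm, comp_mem_comps E v⟩)
      linarith
    rw [h2, h2 fun C => ((C.card : ℚ) - 1) * g C]
    have h3 : ∑ C ∈ ((comps E).erase (comp E u)).erase (comp E v), ((C.card : ℚ) - 1) * g (mer E u v C)
       = ∑ C ∈ ((comps E).erase (comp E u)).erase (comp E v), ((C.card : ℚ) - 1) * g C := by
      apply sum_congr rfl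
      intro C hC
      simp only [mem_erase] at hC
      simp [mer, hC.1, hC.2.1]
    rw [h3]
    simp only [mer, true_or, or_true, if_true]
    ring

lemma card_comps {E : Finset (Sym2 V)} (hE : IsFor E) :
    ((comps E).card : ℚ) = Fintype.card V - E.card := by
  have h := sum_edges hE (fun _ => 1)
  simp only [mul_one, sum_sub_distrib, sum_card_comps, sum_const, nsmul_eq_mul] at h
  linarith

noncomputable def addable (E : Finset (Sym2 V)) : Finset (Sym2 V) :=
  univ.filter fun e => e ∉ E ∧ IsFor (insert e E)

lemma two_sum_sym2 (s : Finset (Sym2 V)) (hs : ∀ e ∈ s, ¬ e.IsDiag) (ψ : Sym2 V → ℚ) :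
    2 * ∑ e ∈ s, ψ e = ∑ u, ∑ v, if s(u, v) ∈ s then ψ s(u, v) else 0 := by
  rw [← sum_product', univ_product_univ]
  have h1 : ∑ x : V × V, (if s(x.1, x.2) ∈ s then ψ s(x.1, x.2) else 0)
      = ∑ e : Sym2 V, ∑ x ∈ univ.filter (fun x : V × V => s(x.1, x.2) = e),
        if e ∈ s then ψ e else 0 := by
    rw [sum_fiberwise' (univ : Finset (V × V)) (fun x => s(x.1, x.2)) (fun e => if e ∈ s then ψ e else 0)]
  rw [h1, mul_sum, ← sum_filter_add_sum_filter_not univ (fun e => e ∈ s), add_comm]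
  have h2 : ∑ x ∈ univ.filter (fun e => e ∉ s), (∑ y ∈ univ.filter (fun y : V × V => s(y.1, y.2) = x), if x ∈ s then ψ x else 0) = 0 := ?_
  · rw [h2, zero_add, filter_mem_eq_inter, univ_inter]
    apply sum_congr rfl
    intro e he
    rw [if_pos he, sum_const, nsmul_eq_mul]
    have hd := hs e he
    induction e with | h u v
    have huv : u ≠ v := by simpa using hd
    have : univ.filter (fun x : V × V => s(x.1, x.2) = s(u, v)) = {(u, v), (v, u)} := by
      ext ⟨a, b⟩
      simp [Sym2.eq_iff]
    rw [this, card_pair]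
    · norm_num
    · simp [huv]
  · apply sum_eq_zero
    intro e he
    apply sum_eq_zero
    intro x _
    rw [if_neg (mem_filter.1 he).2]

lemma sum_addable {E : Finset (Sym2 V)} (hE : IsFor E) (ψ : Sym2 V → ℚ)
    (h : Finset V → Finset V → ℚ)
    (hψ : ∀ u v, comp E u ≠ comp E v → ψ s(u, v) = h (comp E u) (comp E v)) :
    2 * ∑ e ∈ addable E, ψ e = ∑ C ∈ comps E, ∑ D ∈ comps E,
      if C = D then 0 else (C.card : ℚ) * D.card * h C D := by
  have hmem : ∀ u v, s(u, v) ∈ addable E ↔ comp E u ≠ comp E v := by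
    intro u v
    rw [addable, mem_filter, isFor_insert hE]; simp
  rw [two_sum_sym2]
  · have : ∀ u v, (if s(u, v) ∈ addable E then ψ s(u, v) else 0) =
       if comp E u = comp E v then 0 else h (comp E u) (comp E v) := by
      intro u v
      by_cases huv : comp E u = comp E v
      · rw [if_pos huv, if_neg (fun h => (hmem u v).1 h huv)]
      · rw [if_neg huv, if_pos ((hmem u v).2 huv), hψ u v huv]
    simp_rw [this]
    have h1 : ∀ u, ∑ v, (if comp E u = comp E v then 0 else h (comp E u) (comp E v)) =
      ∑ D ∈ comps E, (D.card : ℚ) * (if comp E u = D then 0 else h (comp E u) D) := fun u =>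
        sum_vertices E (fun D => if comp E u = D then 0 else h (comp E u) D)
    simp_rw [h1]
    rw [sum_vertices E (fun C => ∑ D ∈ comps E, (D.card : ℚ) * (if C = D then 0 else h C D))]
    simp_rw [mul_sum]
    apply sum_congr rfl; intro C _
    apply sum_congr rfl; intro D _
    split_ifs <;> ring
  · intro e he
    exact (mem_filter.1 he).2.2.1 e (mem_insert_self _ _)

lemma sum_offdiag (s : Finset (Finset V)) (h : Finset V → Finset V → ℚ) :
    (∑ C ∈ s, ∑ D ∈ s, if C = D then 0 else h C D) = ∑ C ∈ s, ∑ D ∈ s, h C D - ∑ C ∈ s, h C C := by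
  rw [← sum_sub_distrib]
  apply sum_congr rfl
  intro C hC
  have : ∀ D, (if C = D then 0 else h C D) = h C D - if C = D then h C D else 0 := by
    intro D; split_ifs <;> simp
  simp_rw [this]
  rw [sum_sub_distrib, sum_ite_eq, if_pos hC]


noncomputable def forests (V : Type) [Fintype V] (r : ℕ) : Finset (Finset (Sym2 V)) :=
  univ.filter fun E => IsFor E ∧ E.card = r

lemma mem_forests {r : ℕ} {E : Finset (Sym2 V)} : E ∈ forests V r ↔ IsFor E ∧ E.card = r := by
  simp [forests]

lemma mem_addable {E : Finset (Sym2 V)} {e : Sym2 V} :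
    e ∈ addable E ↔ e ∉ E ∧ IsFor (insert e E) := by
  simp [addable]

lemma dcount (r : ℕ) (φ : Finset (Sym2 V) → Sym2 V → ℚ) :
    ∑ F ∈ forests V (r + 1), ∑ e ∈ F, φ F e =
      ∑ F ∈ forests V r, ∑ e ∈ addable F, φ (insert e F) e := by
  rw [sum_sigma', sum_sigma']
  refine sum_bij' (fun x _ => ⟨x.1.erase x.2, x.2⟩) (fun x _ => ⟨insert x.2 x.1, x.2⟩) ?_ ?_ ?_ ?_ ?_
  · rintro ⟨F, e⟩ h
    simp only [mem_sigma, mem_forests, mem_addable] at h ⊢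
    refine ⟨⟨h.1.1.subset (erase_subset _ _), ?_⟩, by simp, ?_⟩
    · rw [card_erase_of_mem h.2, h.1.2]; rfl
    · rw [insert_erase h.2]; exact h.1.1
  · rintro ⟨F, e⟩ h
    simp only [mem_sigma, mem_forests, mem_addable] at h ⊢
    refine ⟨⟨h.2.2, ?_⟩, by simp⟩
    rw [card_insert_of_notMem h.2.1, h.1.2]
  · rintro ⟨F, e⟩ h
    simp only [mem_sigma] at h
    simp [insert_erase h.2]
  · rintro ⟨F, e⟩ h
    simp only [mem_sigma, mem_addable] at h
    simp [erase_insert h.2.1]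
  · rintro ⟨F, e⟩ h
    simp only [mem_sigma] at h
    simp [insert_erase h.2]

noncomputable def P (E : Finset (Sym2 V)) : ℚ := ∏ C ∈ comps E, (C.card : ℚ)
noncomputable def R (E : Finset (Sym2 V)) : ℚ := ∑ C ∈ comps E, 1 / (C.card : ℚ)

lemma P_insert {E : Finset (Sym2 V)} {u v : V} (h : comp E u ≠ comp E v) :
    P (insert s(u, v) E) = P E * (((comp E u).card + (comp E v).card) /
      ((comp E u).card * (comp E v).card)) := by
  have h1 := prod_comps_insert h (fun C => (C.card : ℚ))
  have h2 := card_comp_pos (comp_mem_comps E u)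
  have h3 := card_comp_pos (comp_mem_comps E v)
  rw [card_union_comp h] at h1
  unfold P
  field_simp
  linarith

lemma local_one {E : Finset (Sym2 V)} (hE : IsFor E) :
    ∑ e ∈ addable E, P (insert e E) ^ 2 =
      P E ^ 2 * (Fintype.card V * R E + (comps E).card * ((comps E).card - 2)) := by
  have h := sum_addable hE (fun e => P (insert e E) ^ 2)
    (fun C D => P E ^ 2 * ((C.card + D.card) / (C.card * D.card)) ^ 2)
    (by intro u v huv; rw [P_insert huv]; ring)
  rw [sum_offdiag (comps E) (fun C D => (C.card : ℚ) * D.card *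
    (P E ^ 2 * ((C.card + D.card) / (C.card * D.card)) ^ 2))] at h
  have h1 : ∀ C ∈ comps E, ∀ D ∈ comps E, (C.card : ℚ) * D.card *
    (P E ^ 2 * ((C.card + D.card) / (C.card * D.card)) ^ 2) =
      P E ^ 2 * (C.card * (1 / D.card) + (1 / C.card) * D.card + 2) := by
    intro C hC D hD
    have := card_comp_pos hC
    have := card_comp_pos hD
    field_simp
    ring
  have h2 : ∀ C ∈ comps E, (C.card : ℚ) * C.card *
    (P E ^ 2 * ((C.card + C.card) / (C.card * C.card)) ^ 2) = P E ^ 2 * 4 := by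
    intro C hC
    have := card_comp_pos hC
    field_simp
    ring
  rw [sum_congr rfl (fun C hC => sum_congr rfl (h1 C hC)), sum_congr rfl h2] at h
  simp only [← mul_sum, sum_add_distrib, ← sum_mul, sum_const, nsmul_eq_mul, sum_card_comps] at h
  rw [← R] at h
  linear_combination h / 2

lemma local_two {E : Finset (Sym2 V)} (hE : IsFor E) :
    ∑ e ∈ addable E, P (insert e E) ^ 2 * (1 / ((compE (insert e E) e).card : ℚ)) =
      P E ^ 2 * (((comps E).card - 1) * R E) := by
  have h := sum_addable hE (fun e => P (insert e E) ^ 2 * (1 / ((compE (insert e E) e).card : ℚ)))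
    (fun C D => P E ^ 2 * ((C.card + D.card) / (C.card * D.card)) ^ 2 * (1 / (C.card + D.card)))
    (by
      intro u v huv
      rw [P_insert huv, compE_mk (mem_insert_self _ _), comp_insert]
      simp only [mer, true_or, if_true]
      rw [card_union_comp huv]
      ring)
  rw [sum_offdiag (comps E) (fun C D => (C.card : ℚ) * D.card *
    (P E ^ 2 * ((C.card + D.card) / (C.card * D.card)) ^ 2 * (1 / (C.card + D.card))))] at h
  have h1 : ∀ C ∈ comps E, ∀ D ∈ comps E, (C.card : ℚ) * D.card *
    (P E ^ 2 * ((C.card + D.card) / (C.card * D.card)) ^ 2 * (1 / (C.card + D.card))) =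
      P E ^ 2 * (1 / C.card + 1 / D.card) := by
    intro C hC D hD
    have := card_comp_pos hC
    have := card_comp_pos hD
    field_simp
    ring
  rw [sum_congr rfl (fun C hC => sum_congr rfl (h1 C hC)),
    sum_congr rfl (fun C hC => h1 C hC C hC)] at h
  simp only [← mul_sum, sum_add_distrib, sum_const, nsmul_eq_mul] at h
  rw [← R] at h
  linear_combination h / 2

noncomputable def SA (V : Type) [Fintype V] (r : ℕ) : ℚ := ∑ F ∈ forests V r, P F ^ 2
noncomputable def SB (V : Type) [Fintype V] (r : ℕ) : ℚ := ∑ F ∈ forests V r, P F ^ 2 * R F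

lemma rec_one (r : ℕ) : ((r : ℚ) + 1) * SA V (r + 1) = Fintype.card V * SB V r +
    (Fintype.card V - r) * (Fintype.card V - r - 2) * SA V r := by
  have h := dcount r (fun (F : Finset (Sym2 V)) _ => P F ^ 2)
  have h1 : ∑ F ∈ forests V (r + 1), ∑ e ∈ F, P F ^ 2 = (r + 1) * SA V (r + 1) := by
    rw [SA, mul_sum]
    apply sum_congr rfl
    intro F hF
    rw [sum_const, (mem_forests.1 hF).2, nsmul_eq_mul]
    push_cast; ring
  rw [← h1, h, SA, SB, mul_sum, mul_sum, ← sum_add_distrib]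
  apply sum_congr rfl
  intro F hF
  obtain ⟨hF, hr⟩ := mem_forests.1 hF
  rw [local_one hF, card_comps hF, hr]
  ring

lemma rec_two (r : ℕ) : ((Fintype.card V : ℚ) - r - 1) * SA V (r + 1) - SB V (r + 1) =
    (Fintype.card V - r - 1) * SB V r := by
  have h := dcount r (fun (F : Finset (Sym2 V)) e => P F ^ 2 * (1 / ((compE F e).card : ℚ)))
  have h1 : ∑ F ∈ forests V (r + 1), ∑ e ∈ F, P F ^ 2 * (1 / ((compE F e).card : ℚ)) =
      ((Fintype.card V : ℚ) - r - 1) * SA V (r + 1) - SB V (r + 1) := by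
    rw [SA, SB, mul_sum, ← sum_sub_distrib]
    apply sum_congr rfl
    intro F hF
    obtain ⟨hF, hr⟩ := mem_forests.1 hF
    rw [← mul_sum, sum_edges hF (fun C => 1 / (C.card : ℚ))]
    have h2 : ∀ C ∈ comps F, ((C.card : ℚ) - 1) * (1 / C.card) = 1 - 1 / C.card := by
      intro C hC
      have := card_comp_pos hC
      field_simp
    rw [sum_congr rfl h2, sum_sub_distrib, ← R, sum_const, nsmul_eq_mul, card_comps hF, hr]
    push_cast; ring
  rw [← h1, h, SB, mul_sum]
  apply sum_congr rfl
  intro F hF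
  obtain ⟨hF, hr⟩ := mem_forests.1 hF
  rw [local_two hF, card_comps hF, hr]
  ring

lemma forests_zero : forests V 0 = {∅} := by
  ext F
  rw [mem_forests, mem_singleton, card_eq_zero]
  exact ⟨fun h => h.2, fun h => ⟨h ▸ isFor_empty, h⟩⟩

lemma SA_zero : SA V 0 = 1 := by
  rw [SA, forests_zero, sum_singleton, P, prod_congr rfl (fun C hC => by rw [comps_card_one hC])]
  simp

lemma SB_zero : SB V 0 = Fintype.card V := by
  have h := SA_zero (V := V)
  rw [SA, forests_zero, sum_singleton] at h
  rw [SB, forests_zero, sum_singleton, h, R, sum_congr rfl (fun C hC => by rw [comps_card_one hC])]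
  rw [sum_const, nsmul_eq_mul, card_comps isFor_empty]
  simp

end graph

noncomputable def G (n a N : ℕ) : ℚ :=
  ∑ k ∈ range (N + 1), (Nat.multichoose a (N - k) : ℚ) * ((n : ℚ) ^ k / k.factorial)

lemma G_zero (n a : ℕ) : G n a 0 = 1 := by simp [G]

lemma G_one (n a N : ℕ) : G n (a + 1) (N + 1) = G n a (N + 1) + G n (a + 1) N := by
  unfold G
  rw [sum_range_succ _ (N + 1), sum_range_succ _ (N + 1)]
  have : ∀ k ∈ range (N + 1), (Nat.multichoose (a + 1) (N + 1 - k) : ℚ) * ((n : ℚ) ^ k / k.factorial)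
    = (Nat.multichoose a (N + 1 - k) : ℚ) * ((n : ℚ) ^ k / k.factorial) +
      (Nat.multichoose (a + 1) (N - k) : ℚ) * ((n : ℚ) ^ k / k.factorial) := by
    intro k hk
    have hk := mem_range.1 hk
    have e : N + 1 - k = (N - k) + 1 := by omega
    rw [e, Nat.multichoose_succ_succ]
    push_cast; ring
  rw [sum_congr rfl this, sum_add_distrib]
  simp
  ring

lemma mc_step (a j : ℕ) : (j + 1) * Nat.multichoose a (j + 1) = a * Nat.multichoose (a + 1) j := by
  rw [Nat.multichoose_eq, Nat.multichoose_eq]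
  rcases a with _ | a
  · simp
  · have h := Nat.add_one_mul_choose_eq (a + j) j
    have h2 := Nat.choose_succ_right_eq (a + j + 1) j
    have e1 : a + 1 + (j + 1) - 1 = a + j + 1 := by omega
    have e2 : a + 1 + 1 + j - 1 = a + j + 1 := by omega
    have e3 : a + j + 1 - j = a + 1 := by omega
    rw [e1, e2]
    rw [e3] at h2
    linarith

lemma G_two (n a N : ℕ) : ((N : ℚ) + 1) * G n a (N + 1) = n * G n a N + a * G n (a + 1) N := by
  have h1 : ((N : ℚ) + 1) * G n a (N + 1) =
    ∑ k ∈ range (N + 2), (((N + 1 - k : ℕ) : ℚ) * Nat.multichoose a (N + 1 - k)) * ((n : ℚ) ^ k / k.factorial)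
    + ∑ k ∈ range (N + 2), (Nat.multichoose a (N + 1 - k) : ℚ) * (k * ((n : ℚ) ^ k / k.factorial)) := by
    rw [G, mul_sum, ← sum_add_distrib]
    apply sum_congr rfl
    intro k hk
    have hk := mem_range.1 hk
    rw [Nat.cast_sub (by omega)]
    push_cast; ring
  rw [h1, sum_range_succ _ (N + 1), sum_range_succ' _ (N + 1), add_comm]
  congr 1
  · rw [G, mul_sum]
    simp only [Nat.cast_zero, zero_mul, mul_zero, add_zero]
    apply sum_congr rfl
    intro k hk
    rw [Nat.add_sub_add_right, Nat.factorial_succ]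
    push_cast
    field_simp
    ring
  · rw [G, mul_sum]
    simp only [Nat.sub_self, Nat.cast_zero, zero_mul, add_zero]
    apply sum_congr rfl
    intro k hk
    have hk := mem_range.1 hk
    have e : N + 1 - k = (N - k) + 1 := by omega
    have := mc_step a (N - k)
    rw [e]
    have h2 : (((N - k + 1 : ℕ) : ℚ) * Nat.multichoose a (N - k + 1)) =
      a * Nat.multichoose (a + 1) (N - k) := by exact_mod_cast this
    rw [h2]; ring

lemma G_three (c M n : ℕ) (h : n = c + 1 + M) : (n : ℚ) * G n c M = (c + 1) * G n (c + 2) M := by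
  rcases M with _ | M
  · rw [G_zero, G_zero, h]; push_cast; ring
  · have h1 := G_two n (c + 1) M
    have h2 := G_one n c M
    have h3 := G_one n (c + 1) M
    have hn : (n : ℚ) = c + 1 + (M + 1) := by rw [h]; push_cast; ring
    push_cast at h1
    have e1 : G n (c + 1) M = G n (c + 1) (M + 1) - G n c (M + 1) := by linarith
    have e2 : G n (c + 2) M = G n (c + 2) (M + 1) - G n (c + 1) (M + 1) := by
      have : c + 2 = c + 1 + 1 := rfl
      rw [this]; linarith
    rw [show c + 1 + 1 = c + 2 from rfl, e1, e2] at h1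
    linear_combination h1 + G n (c + 1) (M + 1) * hn

section graph2
variable {V : Type} [Fintype V]

lemma closed (r : ℕ) : ∀ d : ℕ, Fintype.card V = d + 1 + r →
    SA V r = ((Fintype.card V - 1).factorial / d.factorial : ℚ) * G (Fintype.card V) (d + 2) r ∧
    SB V r = ((Fintype.card V - 1).factorial / d.factorial : ℚ) *
      (d * G (Fintype.card V) (d + 1) r + G (Fintype.card V) d r) := by
  induction r with
  | zero =>
    intro d hd
    rw [SA_zero, SB_zero]
    simp only [G_zero]
    have : Fintype.card V - 1 = d := by omega
    have h0 : (d.factorial : ℚ) ≠ 0 := by exact_mod_cast d.factorial_ne_zero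
    rw [this, div_self h0, hd]
    push_cast
    constructor <;> ring
  | succ r ih =>
    intro d hd
    obtain ⟨hA, hB⟩ := ih (d + 1) (by omega)
    have r1 := rec_one (V := V) r
    have r2 := rec_two (V := V) r
    have g1 := G_two (Fintype.card V) (d + 2) r
    have g3 := G_three (d + 1) r (Fintype.card V) (by omega)
    have g4 := G_one (Fintype.card V) (d + 1) r
    have g5 := G_one (Fintype.card V) d r
    have hn : (Fintype.card V : ℚ) - r = d + 2 := by rw [hd]; push_cast; ring
    rw [hn] at r1 r2
    have h0 : (d.factorial : ℚ) ≠ 0 := by exact_mod_cast d.factorial_ne_zero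
    have hf : (((Fintype.card V - 1).factorial : ℚ) / d.factorial) =
      (d + 1) * ((Fintype.card V - 1).factorial / (d + 1).factorial) := by
      rw [Nat.factorial_succ]; push_cast; field_simp
    rw [hf]
    generalize ((Fintype.card V - 1).factorial / (d + 1).factorial : ℚ) = K at *
    generalize (Fintype.card V : ℚ) = x at *
    simp only [show d + 1 + 1 = d + 2 from rfl, show d + 1 + 2 = d + 3 from rfl,
      show d + 2 + 1 = d + 3 from rfl] at *
    push_cast at *
    have hr : (r : ℚ) + 1 ≠ 0 := by positivity
    have hA' : SA V (r + 1) = (d + 1) * K * G (Fintype.card V) (d + 2) (r + 1) := by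
      apply mul_left_cancel₀ hr
      rw [r1, hA, hB]
      linear_combination K * g3 - (d + 1) * K * g1
    refine ⟨hA', ?_⟩
    rw [hA', hB] at r2
    linear_combination (d + 1) * K * (d + 1) * g4 + (d + 1) * K * g5 - r2

lemma local_zero {E : Finset (Sym2 V)} (hE : IsFor E) :
    ∑ e ∈ addable E, P (insert e E) =
      P E * (Fintype.card V * ((comps E).card - 1)) := by
  have h := sum_addable hE (fun e => P (insert e E))
    (fun C D => P E * ((C.card + D.card) / (C.card * D.card)))
    (by intro u v huv; rw [P_insert huv])
  rw [sum_offdiag (comps E) (fun C D => (C.card : ℚ) * D.card *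
    (P E * ((C.card + D.card) / (C.card * D.card))))] at h
  have h1 : ∀ C ∈ comps E, ∀ D ∈ comps E, (C.card : ℚ) * D.card *
    (P E * ((C.card + D.card) / (C.card * D.card))) =
      P E * (C.card + D.card) := by
    intro C hC D hD
    have := card_comp_pos hC
    have := card_comp_pos hD
    field_simp
  rw [sum_congr rfl (fun C hC => sum_congr rfl (h1 C hC)),
    sum_congr rfl (fun C hC => h1 C hC C hC)] at h
  simp only [← mul_sum, sum_add_distrib, sum_const, nsmul_eq_mul, sum_card_comps] at h
  linear_combination h / 2

noncomputable def NT (E : Finset (Sym2 V)) : ℚ :=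
  ∑ T ∈ forests V (Fintype.card V - 1), if E ⊆ T then 1 else 0

lemma NT_rec {E : Finset (Sym2 V)} (d : ℕ) (h : Fintype.card V = E.card + 1 + d) :
    (d : ℚ) * NT E = ∑ e ∈ addable E, NT (insert e E) := by
  unfold NT
  rw [sum_comm, mul_sum]
  apply sum_congr rfl
  intro T hT
  obtain ⟨hT, hc⟩ := mem_forests.1 hT
  by_cases hET : E ⊆ T
  · rw [if_pos hET, mul_one, sum_boole]
    have : (addable E).filter (fun e => insert e E ⊆ T) = T \ E := by
      ext e
      rw [mem_filter, mem_addable, mem_sdiff, insert_subset_iff]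
      constructor
      · tauto
      · rintro ⟨h1, h2⟩
        exact ⟨⟨h2, hT.subset (insert_subset h1 hET)⟩, h1, hET⟩
    rw [this, card_sdiff_of_subset hET, hc]
    congr 1
    omega
  · rw [if_neg hET, mul_zero]
    symm
    apply sum_eq_zero
    intro e _
    rw [if_neg]
    exact fun h => hET ((subset_insert _ _).trans h)

lemma NT_formula (d : ℕ) : ∀ E : Finset (Sym2 V), IsFor E → Fintype.card V = E.card + 1 + d →
    NT E * Fintype.card V = (Fintype.card V : ℚ) ^ d * P E := by
  induction d with
  | zero =>
    intro E hE h
    have h1 : NT E = 1 := by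
      unfold NT
      rw [sum_eq_single E]
      · simp
      · intro T hT hne
        rw [if_neg]
        intro hs
        exact hne (eq_of_subset_of_card_le hs (by rw [(mem_forests.1 hT).2]; omega)).symm
      · intro hn
        exact absurd (mem_forests.2 ⟨hE, by omega⟩) hn
    have h2 := card_comps hE
    have h3 : (comps E).card = 1 := by
      have : ((comps E).card : ℚ) = 1 := by rw [h2, h]; push_cast; ring
      exact_mod_cast this
    obtain ⟨C, hC⟩ := card_eq_one.1 h3
    have h4 := sum_card_comps E
    rw [h1, P]
    rw [hC] at h4 ⊢
    rw [sum_singleton] at h4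
    rw [prod_singleton, h4]; simp
  | succ d ih =>
    intro E hE h
    have h1 := NT_rec (d + 1) h
    have h2 : ∀ e ∈ addable E, NT (insert e E) * Fintype.card V =
        (Fintype.card V : ℚ) ^ d * P (insert e E) := by
      intro e he
      obtain ⟨a, b⟩ := mem_addable.1 he
      exact ih _ b (by rw [card_insert_of_notMem a]; omega)
    have h3 := sum_congr rfl h2
    rw [← sum_mul, ← h1, ← mul_sum, local_zero hE, card_comps hE] at h3
    have h4 : (Fintype.card V : ℚ) - E.card - 1 = d + 1 := by rw [h]; push_cast; ring
    rw [h4] at h3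
    push_cast at h3
    have hd : (d : ℚ) + 1 ≠ 0 := by positivity
    apply mul_left_cancel₀ hd
    linear_combination h3

lemma sum_NT_sq (r : ℕ) : ∑ F ∈ forests V r, NT F ^ 2 =
    ∑ p ∈ forests V (Fintype.card V - 1) ×ˢ forests V (Fintype.card V - 1),
      ((p.1 ∩ p.2).card.choose r : ℚ) := by
  have h1 : ∀ F ∈ forests V r, NT F ^ 2 =
     ∑ p ∈ forests V (Fintype.card V - 1) ×ˢ forests V (Fintype.card V - 1),
       if F ⊆ p.1 ∩ p.2 then (1 : ℚ) else 0 := by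
    intro F _
    rw [sq, NT, sum_mul_sum, ← sum_product']
    apply sum_congr rfl
    intro p _
    simp only [subset_inter_iff]
    split_ifs <;> simp_all
  rw [sum_congr rfl h1, sum_comm]
  apply sum_congr rfl
  intro p hp
  rw [sum_boole, ← card_powersetCard]
  congr 2
  ext F
  rw [mem_filter, mem_forests, mem_powersetCard]
  constructor
  · tauto
  · rintro ⟨a, b⟩
    have := (mem_forests.1 (mem_product.1 hp).1).1
    exact ⟨⟨this.subset (a.trans inter_subset_left), b⟩, a⟩

lemma incl_excl (q m n : ℕ) (hq : q < n) :
    ∑ j ∈ range (n - m), (-1 : ℚ) ^ j * ((m + j).choose m) * (q.choose (m + j)) =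
      if q = m then 1 else 0 := by
  by_cases hqm : q < m
  · rw [if_neg (by omega)]
    apply sum_eq_zero
    intro j _
    rw [Nat.choose_eq_zero_of_lt (show q < m + j by omega)]; simp
  · push Not at hqm
    have h1 : ∀ j ∈ range (n - m), (-1 : ℚ) ^ j * ((m + j).choose m) * (q.choose (m + j)) =
        q.choose m * ((-1) ^ j * (q - m).choose j) := by
      intro j _
      by_cases hj : m + j ≤ q
      · have := Nat.choose_mul (n := q) (k := m + j) (s := m) (Nat.le_add_right m j)
        rw [Nat.add_sub_cancel_left] at this
        have h2 : (q.choose (m + j) : ℚ) * (m + j).choose m = q.choose m * (q - m).choose j := by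
          exact_mod_cast this
        linear_combination (-1) ^ j * h2
      · rw [Nat.choose_eq_zero_of_lt (show q < m + j by omega),
          Nat.choose_eq_zero_of_lt (show q - m < j by omega)]; simp
    rw [sum_congr rfl h1, ← mul_sum]
    have h2 : ∑ j ∈ range (n - m), ((-1 : ℚ) ^ j * (q - m).choose j) =
        ∑ j ∈ range (q - m + 1), ((-1 : ℚ) ^ j * (q - m).choose j) := by
      symm
      apply sum_subset
      · intro x; simp only [mem_range]; omega
      · intro x _ hx
        simp only [mem_range] at hx
        rw [Nat.choose_eq_zero_of_lt (by omega)]; simp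
    have h3 : ∑ j ∈ range (q - m + 1), ((-1 : ℚ) ^ j * (q - m).choose j) = if q - m = 0 then 1 else 0 := by
      have := Int.alternating_sum_range_choose (n := q - m)
      exact_mod_cast this
    rw [h2, h3]
    by_cases e : q = m
    · subst e; simp
    · rw [if_neg e, if_neg (by omega), mul_zero]

lemma Gr_edgeFinset (T : SimpleGraph V) : Gr T.edgeFinset = T := by
  simp [Gr]

lemma isTree_iff_mem [Nonempty V] (T : SimpleGraph V) :
    T.IsTree ↔ T.edgeFinset ∈ forests V (Fintype.card V - 1) := by
  rw [mem_forests]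
  constructor
  · intro h
    refine ⟨⟨?_, by rw [Gr_edgeFinset]; exact h.isAcyclic⟩, ?_⟩
    · intro e he
      exact T.not_isDiag_of_mem_edgeFinset he
    · have := h.card_edgeFinset
      omega
  · rintro ⟨h1, h2⟩
    have h3 := card_comps h1
    have hpos : 0 < Fintype.card V := Fintype.card_pos
    have h4 : (comps T.edgeFinset).card = 1 := by
      have : ((comps T.edgeFinset).card : ℚ) = 1 := by
        rw [h3, h2, Nat.cast_sub hpos]; push_cast; ring
      exact_mod_cast this
    refine ⟨⟨?_⟩, by have := h1.2; rwa [Gr_edgeFinset] at this⟩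
    intro u v
    have h5 := card_le_one.1 h4.le _ (comp_mem_comps T.edgeFinset u) _ (comp_mem_comps T.edgeFinset v)
    rw [comp_eq_iff, Gr_edgeFinset] at h5
    exact h5

lemma count_pairs [Nonempty V] (m : ℕ) :
    (Nat.card {p : SimpleGraph V × SimpleGraph V //
        p.1.IsTree ∧ p.2.IsTree ∧ Nat.card (p.1 ⊓ p.2).edgeSet = m} : ℚ) =
    ∑ p ∈ forests V (Fintype.card V - 1) ×ˢ forests V (Fintype.card V - 1),
      if (p.1 ∩ p.2).card = m then (1 : ℚ) else 0 := by
  rw [sum_boole, Nat.card_eq_fintype_card, Fintype.card_subtype]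
  congr 1
  have hc : ∀ S T : SimpleGraph V, Nat.card (S ⊓ T).edgeSet = (S.edgeFinset ∩ T.edgeFinset).card := by
    intro S T
    rw [← edgeFinset_inf, Nat.card_eq_fintype_card, edgeFinset_card]
  have hinv : ∀ E : Finset (Sym2 V), IsFor E → (Gr E).edgeFinset = E := by
    intro E hE
    ext e
    have := hE.1 e
    rw [mem_edgeFinset]
    induction e with | h u v
    rw [mem_edgeSet, Gr, fromEdgeSet_adj, mem_coe]
    rw [Sym2.mk_isDiag_iff] at this
    tauto
  refine card_bij' (fun p _ => (p.1.edgeFinset, p.2.edgeFinset)) (fun p _ => (Gr p.1, Gr p.2)) ?_ ?_ ?_ ?_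
  · rintro ⟨S, T⟩ h
    simp only [mem_filter, mem_univ, true_and, mem_product] at h ⊢
    exact ⟨⟨(isTree_iff_mem S).1 h.1, (isTree_iff_mem T).1 h.2.1⟩, by rw [← hc]; exact h.2.2⟩
  · rintro ⟨E, F⟩ h
    simp only [mem_filter, mem_univ, true_and, mem_product] at h ⊢
    have e1 := hinv E (mem_forests.1 h.1.1).1
    have e2 := hinv F (mem_forests.1 h.1.2).1
    rw [isTree_iff_mem, isTree_iff_mem, hc, e1, e2]
    exact ⟨h.1.1, h.1.2, h.2⟩
  · rintro ⟨S, T⟩ h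
    simp only [Gr_edgeFinset]
  · rintro ⟨E, F⟩ h
    simp only [mem_filter, mem_product] at h
    simp only [hinv E (mem_forests.1 h.1.1).1, hinv F (mem_forests.1 h.1.2).1]

lemma S_formula [Nonempty V] (r d : ℕ) (h : Fintype.card V = d + 1 + r) :
    ∑ F ∈ forests V r, NT F ^ 2 =
      (Fintype.card V : ℚ) ^ (2 * ((d : ℤ) - 1)) *
        ((Fintype.card V - 1).factorial / (d.factorial : ℚ)) *
          ∑ k ∈ range (r + 1),
            ((Fintype.card V - k).choose (r - k)) * (Fintype.card V : ℚ) ^ k / k.factorial := by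
  have h0 : (Fintype.card V : ℚ) ≠ 0 := by
    have : 0 < Fintype.card V := Fintype.card_pos
    positivity
  have h1 : ∀ F ∈ forests V r, NT F ^ 2 = (Fintype.card V : ℚ) ^ (2 * ((d : ℤ) - 1)) * P F ^ 2 := by
    intro F hF
    obtain ⟨hF, hr⟩ := mem_forests.1 hF
    have h2 := NT_formula d F hF (by omega)
    have h3 : NT F = (Fintype.card V : ℚ) ^ ((d : ℤ) - 1) * P F := by
      rw [zpow_sub_one₀ h0, zpow_natCast]
      field_simp
      linarith
    rw [h3, mul_pow, mul_comm (2 : ℤ), zpow_mul]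
    norm_cast
  rw [sum_congr rfl h1, ← mul_sum, ← SA, (closed r d h).1, mul_assoc]
  congr 2
  unfold G
  apply sum_congr rfl
  intro k hk
  have hk := mem_range.1 hk
  rw [Nat.multichoose_eq, mul_div_assoc]
  have e : d + 2 + (r - k) - 1 = Fintype.card V - k := by omega
  rw [e]


lemma moon_main [Nonempty V] (n m : ℕ) (hcard : Fintype.card V = n) (hm : m ≤ n - 1) :
    (Nat.card {p : SimpleGraph V × SimpleGraph V //
        p.1.IsTree ∧ p.2.IsTree ∧ Nat.card (p.1 ⊓ p.2).edgeSet = m} : ℚ) =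
      ∑ j ∈ Finset.range (n - m),
        (-1 : ℚ) ^ j * ((m + j).choose m) *
          (n : ℚ) ^ (2 * ((n : ℤ) - m - j - 2)) *
          ((n - 1).factorial / ((n - m - j - 1).factorial : ℚ)) *
          ∑ k ∈ Finset.range (m + j + 1),
            ((n - k).choose (m + j - k)) * (n : ℚ) ^ k / k.factorial := by
  have hpos : 0 < Fintype.card V := Fintype.card_pos
  have h1 := Moon.count_pairs (V := V) m
  rw [h1]
  have h2 : ∀ p ∈ Moon.forests V (Fintype.card V - 1) ×ˢ
      Moon.forests V (Fintype.card V - 1),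
      (if (p.1 ∩ p.2).card = m then (1 : ℚ) else 0) =
      ∑ j ∈ Finset.range (n - m), (-1 : ℚ) ^ j * ((m + j).choose m) *
        ((p.1 ∩ p.2).card.choose (m + j)) := by
    intro p hp
    rw [Moon.incl_excl]
    have h3 := (Moon.mem_forests.1 (Finset.mem_product.1 hp).1).2
    have h4 : (p.1 ∩ p.2).card ≤ p.1.card := Finset.card_le_card Finset.inter_subset_left
    rw [hcard] at h3
    omega
  rw [Finset.sum_congr rfl h2, Finset.sum_comm]
  apply Finset.sum_congr rfl
  intro j hj
  have hj := Finset.mem_range.1 hj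
  have h5 := Moon.S_formula (V := V) (m + j) (n - m - j - 1) (by rw [hcard]; omega)
  rw [Moon.sum_NT_sq] at h5
  rw [← Finset.mul_sum, h5, hcard]
  have e : ((n - m - j - 1 : ℕ) : ℤ) - 1 = (n : ℤ) - m - j - 2 := by omega
  rw [e]
  ring

end graph2
end Moon


/-- Moon's formula.  For `n ≥ 2` and `0 ≤ m ≤ n − 1`, the number of
ordered pairs `(T₁, T₂)` of spanning trees of `K_n` with exactly `m` common edges equals
`Σ_{j=0}^{n−m−1} (−1)^j C(m+j, m) n^(2(n−m−j−2)) ((n−1)!/(n−m−j−1)!)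
  Σ_{k=0}^{m+j} C(n−k, m+j−k) n^k / k!`,
evaluated in `ℚ` (so `n^(2(n−m−j−2))` is a possibly negative integer power of `n`). -/
theorem moon_common_edges_count (n m : ℕ) (hn : 2 ≤ n) (hm : m ≤ n - 1) :
    (Nat.card {p : SimpleGraph (Fin n) × SimpleGraph (Fin n) //
        p.1.IsTree ∧ p.2.IsTree ∧ Nat.card (p.1 ⊓ p.2).edgeSet = m} : ℚ) =
      ∑ j ∈ Finset.range (n - m),
        (-1 : ℚ) ^ j * ((m + j).choose m) *
          (n : ℚ) ^ (2 * ((n : ℤ) - m - j - 2)) *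
          ((n - 1).factorial / ((n - m - j - 1).factorial : ℚ)) *
          ∑ k ∈ Finset.range (m + j + 1),
            ((n - k).choose (m + j - k)) * (n : ℚ) ^ k / k.factorial := by
  have : Nonempty (Fin n) := ⟨⟨0, by omega⟩⟩
  exact Moon.moon_main (V := Fin n) n m (Fintype.card_fin n) hm
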